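/- There exists a single function σ : ℕ → ℕ with the following property: for every N ≥ 1, the strategy which stops at the first index k such that π|[k] ends in a left-to-right maximum and the number of value-saturated left-to-right maxima of π|[k] is at least σ(N−k) (stopping at index N if no such k exists) wins the maximum possible number of 321-avoiding permutations of size N among all strategies. -/

import Mathlib

/-!
Let `i` be the number of value-saturated left-to-right maxima of a 321-avoiding prefix. The next
entry must lie above every entry that is not a left-to-right maximum, so it has `i + 1` admissible
positions: at the top (a new left-to-right maximum, and `i` becomes `i + 1`), or just below the top
`j` values for some `1 ≤ j ≤ i` (and `i` becomes `j`). Hence 321-avoiding permutations of size `N`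
correspond to the paths of length `N` from `0` in the generating tree `i ↦ 1, …, i + 1`
(`isCatalanTree_satLabel`), prefix flattenings correspond to initial segments of paths, and the
maximum `N` sits at the last step at which the label rises (`lastRise_iff`).

Backward induction then gives the optimum. With `n` entries to come and label `i`, stopping at a
left-to-right maximum wins `W n i` continuations (`noRecord`) and continuing optimally wins `A n i`
(`optWins`), where `W (n+1) i = ∑_{1 ≤ j ≤ i} W n j` and
`A (n+1) i = max (W n (i+1)) (A n (i+1)) + ∑_{1 ≤ j ≤ i} A n j`. No strategy beats `A N 0`
(`card_winsAfter_le`), and the rule that stops at a left-to-right maximum exactly when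
`A n i ≤ W n i` attains it (`card_winsAfter_threshold`).

That rule is a threshold rule because `A n i / W n i` decreases in `i ≥ 1` (`optWins_ratio_anti`),
by induction on `n`: in the recursion the sums contribute the ratio of partial sums, which inherits
monotonicity, and the first term contributes `max 1 (A n (i+1) / W n (i+1))` times
`W n (i+1) / W (n+1) i = (n+1) / i`, both decreasing. The threshold is finite for every `n` because
`A (n+1) i = O(W n (i+1))` while `W (n+1) i = i / (n+1) * W n (i+1)` (`optWins_growth`).
-/

/-- One-line notation: `π i` is the (0-indexed) rank of the candidate at (0-indexed) position `i`.
`π` avoids the pattern 231 if no three positions carry entries in the relative order 2,3,1. -/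
def Avoids231 {N : ℕ} (π : Fin N → Fin N) : Prop :=
  ¬ ∃ i j k : Fin N, i < j ∧ j < k ∧ π k < π i ∧ π i < π j

def Avoids132 {N : ℕ} (π : Fin N → Fin N) : Prop :=
  ¬ ∃ i j k : Fin N, i < j ∧ j < k ∧ π i < π k ∧ π k < π j

def Avoids321 {N : ℕ} (π : Fin N → Fin N) : Prop :=
  ¬ ∃ i j k : Fin N, i < j ∧ j < k ∧ π k < π j ∧ π j < π i

def Avoids312 {N : ℕ} (π : Fin N → Fin N) : Prop :=
  ¬ ∃ i j k : Fin N, i < j ∧ j < k ∧ π j < π k ∧ π k < π i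

def Avoids123 {N : ℕ} (π : Fin N → Fin N) : Prop :=
  ¬ ∃ i j k : Fin N, i < j ∧ j < k ∧ π i < π j ∧ π j < π k

def Avoids213 {N : ℕ} (π : Fin N → Fin N) : Prop :=
  ¬ ∃ i j k : Fin N, i < j ∧ j < k ∧ π j < π i ∧ π i < π k

/-- The entry at position `m` is a left-to-right maximum. -/
def IsLRMax {N : ℕ} (π : Fin N → Fin N) (m : Fin N) : Prop :=
  ∀ l, l < m → π l < π m

/-- The flattening of the first `k` entries of `π`: the unique length-`k` sequence
on values `0,…,k-1` in the same relative order. -/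
def flatten {N : ℕ} (π : Fin N → Fin N) {k : ℕ} (h : k ≤ N) : Fin k → Fin k :=
  fun a =>
    ⟨(Finset.univ.filter (fun b : Fin k => π (Fin.castLE h b) < π (Fin.castLE h a))).card, by
      have hlt : (Finset.univ.filter
          (fun b : Fin k => π (Fin.castLE h b) < π (Fin.castLE h a))).card <
          (Finset.univ : Finset (Fin k)).card := by
        apply Finset.card_lt_card
        rw [Finset.ssubset_univ_iff]
        intro hEq
        have ha : a ∈ Finset.univ.filter
            (fun b : Fin k => π (Fin.castLE h b) < π (Fin.castLE h a)) := by
          rw [hEq]; exact Finset.mem_univ a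
        simp at ha
      simpa using hlt⟩

/-- The `k`-th prefix flattenings of `π` and `τ` agree. -/
def PrefixEq {N M : ℕ} (π : Fin N → Fin N) (τ : Fin M → Fin M) (k : ℕ)
    (hN : k ≤ N) (hM : k ≤ M) : Prop :=
  ∀ a b : Fin k,
    (π (Fin.castLE hN a) < π (Fin.castLE hN b) ↔ τ (Fin.castLE hM a) < τ (Fin.castLE hM b))

/-- A strategy assigns accept/reject to every prefix flattening. -/
def Strategy : Type := ∀ k : ℕ, (Fin k → Fin k) → Bool

/-- Playing strategy `s` on `π`, the player stops at (1-indexed) position `i`: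
`i` is the least index whose prefix flattening `s` accepts, or `N` if there is none. -/
def StopsAt {N : ℕ} (s : Strategy) (π : Fin N → Fin N) (i : ℕ) : Prop :=
  1 ≤ i ∧ ∃ h : i ≤ N,
    (s i (flatten π h) = true ∨ i = N) ∧
    ∀ j, 1 ≤ j → j < i → ∀ hj : j ≤ N, s j (flatten π hj) = false

/-- Strategy `s` wins `π` if the entry at its stopping position is the maximum value. -/
def Wins {N : ℕ} (s : Strategy) (π : Fin N → Fin N) : Prop :=
  ∃ i, StopsAt s π i ∧ ∃ h1 : i - 1 < N, ∃ h2 : N - 1 < N, π ⟨i - 1, h1⟩ = ⟨N - 1, h2⟩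

/-- The number of value-saturated left-to-right maxima of the length-`k` prefix of `π`:
the largest `i ≤ k` such that every entry among the `i` largest values of the prefix is a
left-to-right maximum (equivalently, each of the top `i` values of the flattened prefix
occurs as a left-to-right maximum). -/
noncomputable def satCount {N : ℕ} (π : Fin N → Fin N) (k : ℕ) : ℕ :=
  sSup {i : ℕ | i ≤ k ∧ ∀ m : Fin N, m.val < k →
    (Finset.univ.filter (fun l : Fin N => l.val < k ∧ π m < π l)).card < i → IsLRMax π m}

/-- The threshold strike strategy with threshold function `σ` wins `π`: the player stops at
the first (1-indexed) index `i` such that the prefix ends in a left-to-right maximum and the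
number of value-saturated left-to-right maxima of the `i`-th prefix is at least `σ (N - i)`
(stopping at index `N` if there is no such index), and the entry there is the maximum. -/
def ThreshWins {N : ℕ} (σ : ℕ → ℕ) (π : Fin N → Fin N) : Prop :=
  ∃ i : ℕ, 1 ≤ i ∧ i ≤ N ∧
    ((∃ h1 : i - 1 < N, IsLRMax π ⟨i - 1, h1⟩ ∧ σ (N - i) ≤ satCount π i) ∨ i = N) ∧
    (∀ j, 1 ≤ j → j < i →
      ¬ ∃ h1 : j - 1 < N, IsLRMax π ⟨j - 1, h1⟩ ∧ σ (N - j) ≤ satCount π j) ∧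
    ∃ h1 : i - 1 < N, π ⟨i - 1, h1⟩ = ⟨N - 1, by omega⟩

/-! ### The value recursions -/

/-- `noRecord n i`: the number of ways to continue a 321-avoiding prefix with `i` value-saturated
left-to-right maxima by `n` further entries without creating a new left-to-right maximum. -/
def noRecord : ℕ → ℕ → ℕ
  | 0, _ => 1
  | n + 1, i => ∑ j ∈ Finset.Icc 1 i, noRecord n j

/-- `optWins n i`: the largest number of continuations, by `n` further entries, of a 321-avoiding
prefix with `i` value-saturated left-to-right maxima that can be won by stopping strictly after
that prefix. -/
def optWins : ℕ → ℕ → ℕ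
  | 0, _ => 0
  | n + 1, i => max (noRecord n (i + 1)) (optWins n (i + 1)) + ∑ j ∈ Finset.Icc 1 i, optWins n j

lemma noRecord_succ_right (n i : ℕ) : noRecord n (i + 1) = (n + i).choose n := by
  induction n generalizing i with
  | zero => simp [noRecord]
  | succ n ih =>
    induction i with
    | zero => simp [noRecord, ih 0]
    | succ i ih2 =>
      rw [noRecord] at ih2 ⊢
      rw [Finset.sum_Icc_succ_top (by omega), ih2, ih (i + 1),
        show n + 1 + (i + 1) = (n + i + 1) + 1 by ring, Nat.choose_succ_succ, add_comm,
        show n + (i + 1) = n + i + 1 by ring, show n + 1 + i = n + i + 1 by ring]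

lemma succ_mul_noRecord_succ (n i : ℕ) :
    (n + 1) * noRecord (n + 1) i = i * noRecord n (i + 1) := by
  cases i with
  | zero => simp [noRecord]
  | succ i =>
    rw [noRecord_succ_right, noRecord_succ_right]
    have := Nat.choose_succ_right_eq (n + i + 1) n
    rw [show n + i + 1 - n = i + 1 by omega] at this
    rw [show n + 1 + i = n + i + 1 by ring, show n + (i + 1) = n + i + 1 by ring]
    linarith

/-- Partial sums inherit a monotone ratio `f / g`, here cleared of denominators. -/
lemma sum_ratio_anti {f g : ℕ → ℕ} (h : ∀ a b, 1 ≤ a → a ≤ b → f b * g a ≤ f a * g b)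
    {i j : ℕ} (hij : i ≤ j) :
    (∑ a ∈ Finset.Icc 1 j, f a) * ∑ a ∈ Finset.Icc 1 i, g a ≤
      (∑ a ∈ Finset.Icc 1 i, f a) * ∑ a ∈ Finset.Icc 1 j, g a := by
  induction j, hij using Nat.le_induction with
  | base => exact le_rfl
  | succ j hij ih =>
    rw [Finset.sum_Icc_succ_top (by omega), Finset.sum_Icc_succ_top (by omega), add_mul, mul_add]
    refine add_le_add ih ?_
    rw [Finset.mul_sum, Finset.sum_mul]
    refine Finset.sum_le_sum fun a ha => ?_
    rw [Finset.mem_Icc] at ha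
    exact h a (j + 1) ha.1 (by omega)

/-- The ratio `optWins n i / noRecord n i` is antitone in `i ≥ 1`. -/
lemma optWins_ratio_anti (n : ℕ) : ∀ i j, 1 ≤ i → i ≤ j →
    optWins n j * noRecord n i ≤ optWins n i * noRecord n j := by
  induction n with
  | zero => simp [optWins]
  | succ n ih =>
    intro i j hi hij
    have hsum := sum_ratio_anti ih hij
    have hmax : max (noRecord n (j + 1)) (optWins n (j + 1)) * noRecord n (i + 1) ≤
        max (noRecord n (i + 1)) (optWins n (i + 1)) * noRecord n (j + 1) := by
      rw [max_mul_of_nonneg _ _ (Nat.zero_le _), max_mul_of_nonneg _ _ (Nat.zero_le _)]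
      exact max_le_max (mul_comm _ _).le (ih (i + 1) (j + 1) (by omega) (by omega))
    have hfirst : max (noRecord n (j + 1)) (optWins n (j + 1)) * noRecord (n + 1) i ≤
        max (noRecord n (i + 1)) (optWins n (i + 1)) * noRecord (n + 1) j := by
      refine le_of_mul_le_mul_left (a := n + 1) ?_ (Nat.succ_pos n)
      calc _ = max (noRecord n (j + 1)) (optWins n (j + 1)) * ((n + 1) * noRecord (n + 1) i) := by
            ring
        _ = i * (max (noRecord n (j + 1)) (optWins n (j + 1)) * noRecord n (i + 1)) := by
            rw [succ_mul_noRecord_succ]; ring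
        _ ≤ j * (max (noRecord n (i + 1)) (optWins n (i + 1)) * noRecord n (j + 1)) :=
            Nat.mul_le_mul hij hmax
        _ = max (noRecord n (i + 1)) (optWins n (i + 1)) * ((n + 1) * noRecord (n + 1) j) := by
            rw [succ_mul_noRecord_succ]; ring
        _ = _ := by ring
    calc optWins (n + 1) j * noRecord (n + 1) i
        = max (noRecord n (j + 1)) (optWins n (j + 1)) * noRecord (n + 1) i +
          (∑ a ∈ Finset.Icc 1 j, optWins n a) * ∑ a ∈ Finset.Icc 1 i, noRecord n a := by
          rw [optWins, add_mul]; rfl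
      _ ≤ max (noRecord n (i + 1)) (optWins n (i + 1)) * noRecord (n + 1) j +
          (∑ a ∈ Finset.Icc 1 i, optWins n a) * ∑ a ∈ Finset.Icc 1 j, noRecord n a :=
          add_le_add hfirst hsum
      _ = _ := by rw [optWins, add_mul]; rfl

lemma noRecord_pos (n i : ℕ) : 0 < noRecord n (i + 1) := by
  rw [noRecord_succ_right]; exact Nat.choose_pos (by omega)

/-- For fixed `n`, `optWins (n + 1)` grows one order slower than `noRecord (n + 1)`. -/
lemma optWins_growth (n : ℕ) : ∃ c, ∀ i, optWins (n + 1) i ≤ c * noRecord n (i + 1) := by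
  induction n with
  | zero => exact ⟨1, fun i => by simp [optWins, noRecord]⟩
  | succ n ih =>
    obtain ⟨c, hc⟩ := ih
    refine ⟨c * (n + 1) + 1 + c, fun i => ?_⟩
    have hsum : ∑ j ∈ Finset.Icc 1 i, optWins (n + 1) j ≤ c * noRecord (n + 1) (i + 1) := by
      calc _ ≤ ∑ j ∈ Finset.Icc 1 i, c * noRecord n (j + 1) := Finset.sum_le_sum fun j _ => hc j
        _ = c * ∑ j ∈ Finset.Icc 2 (i + 1), noRecord n j := by
            rw [← Finset.mul_sum, ← Finset.map_add_right_Icc 1 i 1, Finset.sum_map]; rfl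
        _ ≤ _ := by
            refine Nat.mul_le_mul_left _ ?_
            rw [noRecord]
            exact Finset.sum_le_sum_of_subset (Finset.Icc_subset_Icc (by omega) le_rfl)
    have hlow : noRecord n (i + 1 + 1) ≤ (n + 1) * noRecord (n + 1) (i + 1) := by
      rw [succ_mul_noRecord_succ]; exact Nat.le_mul_of_pos_left _ (Nat.succ_pos i)
    have h1 : optWins (n + 1) (i + 1) ≤ c * (n + 1) * noRecord (n + 1) (i + 1) :=
      (hc (i + 1)).trans (by rw [mul_assoc]; exact Nat.mul_le_mul_left _ hlow)
    rw [optWins]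
    have h2 : max (noRecord (n + 1) (i + 1)) (optWins (n + 1) (i + 1)) ≤
        noRecord (n + 1) (i + 1) + c * (n + 1) * noRecord (n + 1) (i + 1) :=
      max_le (by omega) (by omega)
    calc _ ≤ _ := add_le_add h2 hsum
      _ = _ := by ring

lemma exists_optWins_le_noRecord (n : ℕ) : ∃ i, 1 ≤ i ∧ optWins n i ≤ noRecord n i := by
  cases n with
  | zero => exact ⟨1, le_rfl, by simp [optWins]⟩
  | succ n =>
    obtain ⟨c, hc⟩ := optWins_growth n
    refine ⟨(n + 1) * c + 1, by omega, ?_⟩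
    refine le_of_mul_le_mul_left (a := n + 1) ?_ (Nat.succ_pos n)
    rw [succ_mul_noRecord_succ]
    calc _ ≤ (n + 1) * (c * noRecord n ((n + 1) * c + 1 + 1)) := Nat.mul_le_mul_left _ (hc _)
      _ = (n + 1) * c * noRecord n ((n + 1) * c + 1 + 1) := by ring
      _ ≤ _ := Nat.mul_le_mul_right _ (by omega)

/-- Stopping is at least as good as continuing exactly from a threshold on. -/
lemma exists_threshold :
    ∃ σ : ℕ → ℕ, ∀ n i, 1 ≤ i → (σ n ≤ i ↔ optWins n i ≤ noRecord n i) := by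
  classical
  refine ⟨fun n => Nat.find (exists_optWins_le_noRecord n), fun n i hi => ⟨fun h => ?_, fun h =>
    Nat.find_min' _ ⟨hi, h⟩⟩⟩
  obtain ⟨h1, h2⟩ := Nat.find_spec (exists_optWins_le_noRecord n)
  obtain ⟨m, hm⟩ : ∃ m, Nat.find (exists_optWins_le_noRecord n) = m + 1 :=
    ⟨_, (Nat.sub_add_cancel h1).symm⟩
  simp only [hm] at h h1 h2
  refine Nat.le_of_mul_le_mul_right (c := noRecord n (m + 1)) ?_ (noRecord_pos n m)
  calc _ ≤ optWins n (m + 1) * noRecord n i := optWins_ratio_anti n _ _ h1 h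
    _ ≤ noRecord n (m + 1) * noRecord n i := Nat.mul_le_mul_right _ h2
    _ = _ := mul_comm _ _

/-! ### The game on label sequences -/

section Game

variable {Ω : Type*}

/-- `ω` and `τ` have the same labels up to time `k`. -/
def Agree (lab : Ω → ℕ → ℕ) (k : ℕ) (ω τ : Ω) : Prop := ∀ j ≤ k, lab τ j = lab ω j

/-- The label sequences `lab ω 0, …, lab ω N` are, each exactly once, the paths starting at `0` in
the generating tree in which a node labelled `i` has children labelled `1, …, i + 1`. -/
structure IsCatalanTree (N : ℕ) (lab : Ω → ℕ → ℕ) : Prop where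
  zero : ∀ ω, lab ω 0 = 0
  pos : ∀ ω k, k < N → 1 ≤ lab ω (k + 1)
  le_succ : ∀ ω k, k < N → lab ω (k + 1) ≤ lab ω k + 1
  extend : ∀ ω k, k < N → ∀ j, 1 ≤ j → j ≤ lab ω k + 1 →
    ∃ τ, Agree lab k ω τ ∧ lab τ (k + 1) = j
  inj : ∀ ω τ, Agree lab N ω τ → τ = ω

/-- No step after time `k` increases the label. -/
def NoRise (N : ℕ) (lab : Ω → ℕ → ℕ) (k : ℕ) (ω : Ω) : Prop :=
  ∀ j, k ≤ j → j < N → lab ω (j + 1) ≠ lab ω j + 1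

/-- The step ending at time `i` is the last one to increase the label. -/
def LastRise (N : ℕ) (lab : Ω → ℕ → ℕ) (i : ℕ) (ω : Ω) : Prop :=
  lab ω i = lab ω (i - 1) + 1 ∧ NoRise N lab i ω

/-- The rule `st`, applied only at times after `k` (with a forced stop at time `N`), stops at the
time of the last rise. -/
def WinsAfter (N : ℕ) (lab : Ω → ℕ → ℕ) (st : Ω → ℕ → Prop) (k : ℕ) (ω : Ω) : Prop :=
  ∃ i, k < i ∧ i ≤ N ∧ (st ω i ∨ i = N) ∧ (∀ j, k < j → j < i → ¬ st ω j) ∧ LastRise N lab i ω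

variable {N : ℕ} {lab : Ω → ℕ → ℕ} {st : Ω → ℕ → Prop}

open Classical in
lemma card_agree_eq_sum [Fintype Ω] (hT : IsCatalanTree N lab) {k : ℕ} (hk : k < N)
    (ω : Ω) (Q : Ω → Prop) :
    (Finset.univ.filter fun τ => Agree lab k ω τ ∧ Q τ).card =
      ∑ j ∈ Finset.Icc 1 (lab ω k + 1), (Finset.univ.filter fun τ =>
        (Agree lab k ω τ ∧ lab τ (k + 1) = j) ∧ Q τ).card := by
  rw [Finset.card_eq_sum_card_fiberwise (f := fun τ => lab τ (k + 1))
    (t := Finset.Icc 1 (lab ω k + 1))]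
  · refine Finset.sum_congr rfl fun j _ => ?_
    rw [Finset.filter_filter]
    congr 1
    ext τ
    simp only [Finset.mem_filter, Finset.mem_univ, true_and]
    tauto
  · intro τ hτ
    simp only [Finset.coe_filter, Finset.mem_univ, true_and, Set.mem_ofPred_eq] at hτ
    simp only [Finset.coe_Icc, Set.mem_Icc]
    exact ⟨hT.pos τ k hk, hτ.1 k le_rfl ▸ hT.le_succ τ k hk⟩

lemma agree_succ_iff {k : ℕ} {ω ω' τ : Ω} (h : Agree lab k ω ω') :
    (Agree lab k ω τ ∧ lab τ (k + 1) = lab ω' (k + 1)) ↔ Agree lab (k + 1) ω' τ := by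
  constructor
  · rintro ⟨h1, h2⟩ j hj
    rcases Nat.lt_or_ge j (k + 1) with hj' | hj'
    · rw [h1 j (by omega), h j (by omega)]
    · obtain rfl : j = k + 1 := by omega
      exact h2
  · intro h1
    exact ⟨fun j hj => by rw [h1 j (by omega), h j hj], h1 _ le_rfl⟩

lemma noRise_of_le {k : ℕ} {τ : Ω} (h : lab τ (k + 1) ≤ lab τ k) :
    NoRise N lab k τ ↔ NoRise N lab (k + 1) τ := by
  constructor
  · exact fun h1 j hj => h1 j (by omega)
  · intro h1 j hj hjN
    rcases Nat.lt_or_ge k j with hj' | hj'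
    · exact h1 j hj' hjN
    · obtain rfl : j = k := by omega
      omega

open Classical in
lemma card_noRise [Fintype Ω] (hT : IsCatalanTree N lab) (n k : ℕ) (hk : k + n = N) (ω : Ω) :
    (Finset.univ.filter fun τ => Agree lab k ω τ ∧ NoRise N lab k τ).card =
      noRecord n (lab ω k) := by
  induction n generalizing k ω with
  | zero =>
    obtain rfl : k = N := by omega
    rw [noRecord, Finset.card_eq_one]
    refine ⟨ω, Finset.ext fun τ => ?_⟩
    simp only [Finset.mem_filter, Finset.mem_univ, true_and, Finset.mem_singleton]
    refine ⟨fun h => hT.inj _ _ h.1, ?_⟩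
    rintro rfl
    exact ⟨fun _ _ => rfl, fun j h1 h2 => by omega⟩
  | succ n ih =>
    rw [card_agree_eq_sum hT (by omega), Finset.sum_Icc_succ_top (by omega), noRecord]
    have htop : (Finset.univ.filter fun τ =>
        (Agree lab k ω τ ∧ lab τ (k + 1) = lab ω k + 1) ∧ NoRise N lab k τ).card = 0 := by
      rw [Finset.card_eq_zero, Finset.filter_eq_empty_iff]
      rintro τ - ⟨⟨h1, h2⟩, h3⟩
      exact h3 k le_rfl (by omega) (by rw [h2, h1 k le_rfl])
    rw [htop, add_zero]
    refine Finset.sum_congr rfl fun j hj => ?_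
    rw [Finset.mem_Icc] at hj
    obtain ⟨ω', hω', hl⟩ := hT.extend ω k (by omega) j hj.1 (by omega)
    rw [← hl, ← ih (k + 1) (by omega) ω']
    congr 1
    ext τ
    simp only [Finset.mem_filter, Finset.mem_univ, true_and]
    rw [agree_succ_iff hω']
    refine and_congr_right fun h => noRise_of_le ?_
    have h3 := ((agree_succ_iff hω').2 h).1 k le_rfl
    have h4 := h (k + 1) le_rfl
    omega

lemma winsAfter_iff_lastRise {k : ℕ} {τ : Ω} (hk : k < N) (h : st τ (k + 1) ∨ k + 1 = N) :
    WinsAfter N lab st k τ ↔ LastRise N lab (k + 1) τ := by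
  constructor
  · rintro ⟨i, h1, h2, h3, h4, h5⟩
    obtain rfl : i = k + 1 := by
      by_contra hne
      rcases h with h | h
      · exact h4 (k + 1) (by omega) (by omega) h
      · omega
    exact h5
  · exact fun h5 => ⟨k + 1, by omega, by omega, h, fun j _ _ => by omega, h5⟩

lemma winsAfter_continue {k : ℕ} {τ : Ω} (h : ¬ (st τ (k + 1) ∨ k + 1 = N)) :
    WinsAfter N lab st k τ ↔ WinsAfter N lab st (k + 1) τ := by
  constructor
  · rintro ⟨i, h1, h2, h3, h4, h5⟩
    refine ⟨i, ?_, h2, h3, fun j hj => h4 j (by omega), h5⟩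
    by_contra hne
    obtain rfl : i = k + 1 := by omega
    exact h h3
  · rintro ⟨i, h1, h2, h3, h4, h5⟩
    refine ⟨i, by omega, h2, h3, fun j hj hji => ?_, h5⟩
    rcases Nat.lt_or_ge (k + 1) j with hj' | hj'
    · exact h4 j hj' hji
    · obtain rfl : j = k + 1 := by omega
      exact fun h' => h (Or.inl h')

open Classical in
/-- One step of the game: at the child `ω'` of the node `ω` reached at time `k + 1`, the rule either
stops, or is continued from time `k + 1` on. -/
lemma card_winsAfter_child [Fintype Ω] (hT : IsCatalanTree N lab)
    (hst : ∀ k ω τ, Agree lab k ω τ → (st τ k ↔ st ω k))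
    {n k : ℕ} (hk : k + (n + 1) = N) {ω ω' : Ω} (hω' : Agree lab k ω ω') :
    (Finset.univ.filter fun τ => (Agree lab k ω τ ∧ lab τ (k + 1) = lab ω' (k + 1)) ∧
      WinsAfter N lab st k τ).card =
    if st ω' (k + 1) ∨ k + 1 = N then
      if lab ω' (k + 1) = lab ω k + 1 then noRecord n (lab ω' (k + 1)) else 0
    else (Finset.univ.filter fun τ => Agree lab (k + 1) ω' τ ∧
      WinsAfter N lab st (k + 1) τ).card := by
  split_ifs with h1 h2
  · rw [← card_noRise hT n (k + 1) (by omega) ω']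
    congr 1
    ext τ
    simp only [Finset.mem_filter, Finset.mem_univ, true_and]
    rw [agree_succ_iff hω']
    refine and_congr_right fun h => ?_
    rw [winsAfter_iff_lastRise (by omega) (by rwa [hst _ _ _ h])]
    have h3 := ((agree_succ_iff hω').2 h).1 k le_rfl
    have h4 := h (k + 1) le_rfl
    rw [LastRise, Nat.add_sub_cancel]
    exact and_iff_right (by omega)
  · rw [Finset.card_eq_zero, Finset.filter_eq_empty_iff]
    rintro τ - ⟨h, hw⟩
    have h' := (agree_succ_iff hω').1 h
    rw [winsAfter_iff_lastRise (by omega) (by rwa [hst _ _ _ h'])] at hw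
    have h3 := h.1 k le_rfl
    have h4 := hw.1
    rw [Nat.add_sub_cancel] at h4
    omega
  · congr 1
    ext τ
    simp only [Finset.mem_filter, Finset.mem_univ, true_and]
    rw [agree_succ_iff hω']
    refine and_congr_right fun h => ?_
    rw [winsAfter_continue (by rwa [hst _ _ _ h])]

open Classical in
lemma card_winsAfter_le [Fintype Ω] (hT : IsCatalanTree N lab)
    (hst : ∀ k ω τ, Agree lab k ω τ → (st τ k ↔ st ω k)) (n k : ℕ) (hk : k + n = N) (ω : Ω) :
    (Finset.univ.filter fun τ => Agree lab k ω τ ∧ WinsAfter N lab st k τ).card ≤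
      optWins n (lab ω k) := by
  induction n generalizing k ω with
  | zero =>
    rw [optWins, Nat.le_zero, Finset.card_eq_zero, Finset.filter_eq_empty_iff]
    rintro τ - ⟨-, i, h1, h2, -⟩
    omega
  | succ n ih =>
    rw [card_agree_eq_sum hT (by omega), Finset.sum_Icc_succ_top (by omega), optWins, add_comm]
    refine add_le_add ?_ (Finset.sum_le_sum fun j hj => ?_)
    · obtain ⟨ω', hω', hl⟩ := hT.extend ω k (by omega) (lab ω k + 1) (by omega) le_rfl
      rw [← hl, card_winsAfter_child hT hst hk hω', if_pos hl]
      split_ifs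
      · exact le_max_left _ _
      · exact (ih (k + 1) (by omega) ω').trans (le_max_right _ _)
    · rw [Finset.mem_Icc] at hj
      obtain ⟨ω', hω', hl⟩ := hT.extend ω k (by omega) j hj.1 (by omega)
      rw [← hl, card_winsAfter_child hT hst hk hω',
        if_neg (show ¬ lab ω' (k + 1) = lab ω k + 1 by omega)]
      split_ifs
      · exact Nat.zero_le _
      · exact ih (k + 1) (by omega) ω'

open Classical in
lemma card_winsAfter_threshold [Fintype Ω] (hT : IsCatalanTree N lab) {σ : ℕ → ℕ}
    (hσ : ∀ n i, 1 ≤ i → (σ n ≤ i ↔ optWins n i ≤ noRecord n i))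
    (hst : ∀ k ω τ, Agree lab k ω τ → (st τ k ↔ st ω k))
    (hthr : ∀ ω k, k < N → (st ω (k + 1) ↔
      lab ω (k + 1) = lab ω k + 1 ∧ σ (N - (k + 1)) ≤ lab ω (k + 1)))
    (n k : ℕ) (hk : k + n = N) (ω : Ω) :
    (Finset.univ.filter fun τ => Agree lab k ω τ ∧ WinsAfter N lab st k τ).card =
      optWins n (lab ω k) := by
  induction n generalizing k ω with
  | zero =>
    rw [optWins, Finset.card_eq_zero, Finset.filter_eq_empty_iff]
    rintro τ - ⟨-, i, h1, h2, -⟩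
    omega
  | succ n ih =>
    rw [card_agree_eq_sum hT (by omega), Finset.sum_Icc_succ_top (by omega), optWins, add_comm]
    congr 1
    · obtain ⟨ω', hω', hl⟩ := hT.extend ω k (by omega) (lab ω k + 1) (by omega) le_rfl
      have hk' := hω' k le_rfl
      rw [← hl, card_winsAfter_child hT hst hk hω', if_pos hl, ih (k + 1) (by omega) ω',
        hthr ω' k (by omega), show N - (k + 1) = n by omega, hσ n _ (by omega), hk',
        and_iff_right hl]
      split_ifs with h
      · rcases h with h | h
        · exact (max_eq_left h).symm
        · obtain rfl : n = 0 := by omega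
          exact (max_eq_left (by simp [optWins])).symm
      · exact (max_eq_right (by omega)).symm
    · refine Finset.sum_congr rfl fun j hj => ?_
      rw [Finset.mem_Icc] at hj
      obtain ⟨ω', hω', hl⟩ := hT.extend ω k (by omega) j hj.1 (by omega)
      have hk' := hω' k le_rfl
      rw [← hl, card_winsAfter_child hT hst hk hω', ih (k + 1) (by omega) ω',
        if_neg (show ¬ lab ω' (k + 1) = lab ω k + 1 by omega)]
      split_ifs with h
      · rw [hthr ω' k (by omega)] at h
        obtain rfl : n = 0 := by omega
        rfl
      · rfl

end Game

/-! ### Saturated maxima of integer sequences -/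

section Sequences

/-- Entry `m` of `f` is not a left-to-right maximum (for injective `f`). -/
def HasInv (f : ℕ → ℕ) (m : ℕ) : Prop := ∃ a < m, f m < f a

/-- The first `k` entries of `f` avoid the pattern 321. -/
def Av (f : ℕ → ℕ) (k : ℕ) : Prop :=
  ∀ a b c, a < b → b < c → c < k → f c < f b → ¬ f b < f a

/-- The first `k` entries of `f` and `g` are in the same relative order. -/
def SameOrder (k : ℕ) (f g : ℕ → ℕ) : Prop := ∀ a < k, ∀ b < k, (f a < f b ↔ g a < g b)

open Classical in
/-- Positions of the entries of the length-`k` prefix that exceed every entry which is not a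
left-to-right maximum. -/
noncomputable def satSet (f : ℕ → ℕ) (k : ℕ) : Finset ℕ :=
  (Finset.range k).filter fun l => ∀ m < k, HasInv f m → f m < f l

/-- Positions of the earlier entries exceeding entry `k`. -/
def aboveSet (f : ℕ → ℕ) (k : ℕ) : Finset ℕ := (Finset.range k).filter fun l => f k < f l

lemma mem_satSet {f : ℕ → ℕ} {k l : ℕ} :
    l ∈ satSet f k ↔ l < k ∧ ∀ m < k, HasInv f m → f m < f l := by
  simp [satSet]

lemma mem_aboveSet {f : ℕ → ℕ} {k l : ℕ} : l ∈ aboveSet f k ↔ l < k ∧ f k < f l := by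
  simp [aboveSet]

lemma hasInv_iff_aboveSet {f : ℕ → ℕ} {k : ℕ} : HasInv f k ↔ 1 ≤ (aboveSet f k).card := by
  rw [Nat.one_le_iff_ne_zero, Ne, Finset.card_eq_zero, ← Ne, ← Finset.nonempty_iff_ne_empty]
  exact ⟨fun ⟨a, h⟩ => ⟨a, mem_aboveSet.2 h⟩, fun ⟨a, h⟩ => ⟨a, mem_aboveSet.1 h⟩⟩

lemma SameOrder.mono {f g : ℕ → ℕ} {j k : ℕ} (h : SameOrder k f g) (hjk : j ≤ k) :
    SameOrder j f g := fun a ha b hb => h a (by omega) b (by omega)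

lemma SameOrder.hasInv {f g : ℕ → ℕ} {k m : ℕ} (h : SameOrder k f g) (hm : m < k) :
    HasInv f m ↔ HasInv g m := by
  refine exists_congr fun a => and_congr_right fun ha => h m hm a (by omega)

lemma SameOrder.satSet_eq {f g : ℕ → ℕ} {k : ℕ} (h : SameOrder k f g) :
    satSet f k = satSet g k := by
  ext l
  rw [mem_satSet, mem_satSet]
  refine and_congr_right fun hl => forall_congr' fun m => forall_congr' fun hm => ?_
  rw [h.hasInv hm, h m hm l hl]

lemma satSet_succ_of_not_hasInv {f : ℕ → ℕ} {k : ℕ} (hinj : ∀ a ≤ k, ∀ b ≤ k, f a = f b → a = b)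
    (h : ¬ HasInv f k) : (satSet f (k + 1)).card = (satSet f k).card + 1 := by
  have hlt : ∀ l < k, f l < f k := by
    intro l hl
    have h1 : ¬ f k < f l := fun h1 => h ⟨l, hl, h1⟩
    have h2 : f l ≠ f k := fun h2 => by
      have := hinj l (by omega) k le_rfl h2
      omega
    omega
  have : satSet f (k + 1) = insert k (satSet f k) := by
    ext l
    rw [Finset.mem_insert, mem_satSet, mem_satSet]
    constructor
    · rintro ⟨h1, h2⟩
      rcases Nat.lt_or_ge l k with hl | hl
      · exact Or.inr ⟨hl, fun m hm => h2 m (by omega)⟩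
      · exact Or.inl (by omega)
    · rintro (rfl | ⟨h1, h2⟩)
      · refine ⟨by omega, fun m hm hI => ?_⟩
        rcases Nat.lt_or_ge m l with hm' | hm'
        · exact hlt m hm'
        · obtain rfl : m = l := by omega
          exact absurd hI h
      · refine ⟨by omega, fun m hm hI => ?_⟩
        rcases Nat.lt_or_ge m k with hm' | hm'
        · exact h2 m hm' hI
        · obtain rfl : m = k := by omega
          exact absurd hI h
  rw [this, Finset.card_insert_of_notMem]
  rw [mem_satSet]
  omega

lemma aboveSet_subset_satSet {f : ℕ → ℕ} {k : ℕ} (hav : Av f (k + 1)) :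
    aboveSet f k ⊆ satSet f k := by
  intro l hl
  rw [mem_aboveSet] at hl
  refine mem_satSet.2 ⟨hl.1, fun m hm ⟨a, ha, hlt⟩ => ?_⟩
  by_contra hcon
  exact hav a m k ha hm (by omega) (by omega) hlt

lemma satSet_succ_of_hasInv {f : ℕ → ℕ} {k : ℕ} (hav : Av f (k + 1)) (h : HasInv f k) :
    satSet f (k + 1) = aboveSet f k := by
  ext l
  constructor
  · intro hl
    rw [mem_satSet] at hl
    have := hl.2 k (by omega) h
    refine mem_aboveSet.2 ⟨?_, this⟩
    have : l ≠ k := by rintro rfl; omega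
    omega
  · intro hl
    have h1 := mem_satSet.1 (aboveSet_subset_satSet hav hl)
    rw [mem_aboveSet] at hl
    refine mem_satSet.2 ⟨by omega, fun m hm hI => ?_⟩
    rcases Nat.lt_or_ge m k with hm' | hm'
    · exact h1.2 m hm' hI
    · obtain rfl : m = k := by omega
      exact hl.2

lemma satSet_card_step {f : ℕ → ℕ} {k : ℕ} (hinj : ∀ a ≤ k, ∀ b ≤ k, f a = f b → a = b)
    (hav : Av f (k + 1)) :
    1 ≤ (satSet f (k + 1)).card ∧ (satSet f (k + 1)).card ≤ (satSet f k).card + 1 ∧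
      ((satSet f (k + 1)).card = (satSet f k).card + 1 ↔ ¬ HasInv f k) := by
  by_cases h : HasInv f k
  · have h1 := Finset.card_le_card (aboveSet_subset_satSet hav)
    rw [satSet_succ_of_hasInv hav h]
    have h2 := hasInv_iff_aboveSet.1 h
    exact ⟨h2, by omega, ⟨fun _ => by omega, fun h' => absurd h h'⟩⟩
  · rw [satSet_succ_of_not_hasInv hinj h]
    exact ⟨by omega, le_rfl, by simp [h]⟩

/-- The number of saturated maxima at time `k + 1` determines how many earlier entries lie above
entry `k`, hence the relative position of that entry. -/
lemma sameOrder_succ {f g : ℕ → ℕ} {k : ℕ} (hf : ∀ a ≤ k, ∀ b ≤ k, f a = f b → a = b)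
    (hg : ∀ a ≤ k, ∀ b ≤ k, g a = g b → a = b) (hfa : Av f (k + 1)) (hga : Av g (k + 1))
    (h : SameOrder k f g) (hs : (satSet f (k + 1)).card = (satSet g (k + 1)).card) :
    SameOrder (k + 1) f g := by
  have hF := satSet_card_step hf hfa
  have hG := satSet_card_step hg hga
  have hk : (satSet f k).card = (satSet g k).card := by rw [h.satSet_eq]
  have hcard : (aboveSet f k).card = (aboveSet g k).card := by
    by_cases hI : HasInv f k
    · have hI' : HasInv g k := by
        by_contra hcon
        exact (hF.2.2.1 (by rw [hs, hk]; exact hG.2.2.2 hcon)) hI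
      rw [← satSet_succ_of_hasInv hfa hI, ← satSet_succ_of_hasInv hga hI', hs]
    · have hI' : ¬ HasInv g k := hG.2.2.1 (by rw [← hs, ← hk]; exact hF.2.2.2 hI)
      rw [hasInv_iff_aboveSet] at hI hI'
      omega
  -- Both sets are upper sets of one linear order on `{0, …, k - 1}`, hence nested.
  have hnest : aboveSet f k ⊆ aboveSet g k ∨ aboveSet g k ⊆ aboveSet f k := by
    by_contra hcon
    rw [not_or, Finset.not_subset, Finset.not_subset] at hcon
    obtain ⟨⟨x, hx1, hx2⟩, ⟨y, hy1, hy2⟩⟩ := hcon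
    rw [mem_aboveSet] at hx1 hx2 hy1 hy2
    have h1 := h y hy1.1 x hx1.1
    have h2 : ¬ g k < g x := fun h' => hx2 ⟨hx1.1, h'⟩
    have h3 : ¬ f k < f y := fun h' => hy2 ⟨hy1.1, h'⟩
    omega
  have heq : aboveSet f k = aboveSet g k := by
    rcases hnest with h' | h'
    · exact Finset.eq_of_subset_of_card_le h' hcard.ge
    · exact (Finset.eq_of_subset_of_card_le h' hcard.le).symm
  have hup : ∀ l < k, (f k < f l ↔ g k < g l) := by
    intro l hl
    have := Finset.ext_iff.1 heq l
    rw [mem_aboveSet, mem_aboveSet] at this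
    tauto
  have hdown : ∀ l < k, (f l < f k ↔ g l < g k) := by
    intro l hl
    have h1 := hup l hl
    have h2 : f l ≠ f k := fun h' => by have := hf l (by omega) k le_rfl h'; omega
    have h3 : g l ≠ g k := fun h' => by have := hg l (by omega) k le_rfl h'; omega
    omega
  intro a ha b hb
  rcases Nat.lt_or_ge a k with ha' | ha' <;> rcases Nat.lt_or_ge b k with hb' | hb'
  · exact h a ha' b hb'
  · obtain rfl : b = k := by omega
    exact hdown a ha'
  · obtain rfl : a = k := by omega
    exact hup b hb'
  · obtain rfl : a = k := by omega
    obtain rfl : b = a := by omega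
    simp

/-- Append the value `v` after the first `N` entries of `f`, shifting up the entries `≥ v`. -/
def appendVal (f : ℕ → ℕ) (N v : ℕ) (l : ℕ) : ℕ :=
  if l < N then (if f l < v then f l else f l + 1) else v

/-- Every path in the generating tree is realised by a 321-avoiding permutation. -/
lemma exists_of_labels (w : ℕ → ℕ) (h0 : w 0 = 0) (N : ℕ)
    (hpos : ∀ k < N, 1 ≤ w (k + 1)) (hle : ∀ k < N, w (k + 1) ≤ w k + 1) :
    ∃ f : ℕ → ℕ, (∀ a < N, f a < N) ∧ (∀ a < N, ∀ b < N, f a = f b → a = b) ∧ Av f N ∧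
      ∀ k ≤ N, (satSet f k).card = w k := by
  induction N with
  | zero =>
    refine ⟨id, by simp, by simp, fun a b c _ _ h => by omega, fun k hk => ?_⟩
    obtain rfl : k = 0 := by omega
    simp [satSet, h0]
  | succ N ih =>
    obtain ⟨f, hlt, hinj, hav, hw⟩ :=
      ih (fun k hk => hpos k (by omega)) fun k hk => hle k (by omega)
    -- The new entry has to be placed below exactly `c` earlier entries.
    obtain ⟨c, hc, hcw⟩ : ∃ c ≤ w N, w (N + 1) = if c = 0 then w N + 1 else c := by
      have h1 := hpos N (by omega)
      have h2 := hle N (by omega)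
      by_cases h : w (N + 1) = w N + 1
      · exact ⟨0, by omega, by simp [h]⟩
      · exact ⟨w (N + 1), by omega, by rw [if_neg (by omega)]⟩
    have hcN : c ≤ N := by
      refine hc.trans ?_
      rw [← hw N le_rfl]
      simpa using Finset.card_le_card
        (fun l hl => Finset.mem_range.2 (mem_satSet.1 hl).1 : satSet f N ⊆ Finset.range N)
    set v := N - c with hv
    set g := appendVal f N v with hg
    have hgl : ∀ l < N, g l = if f l < v then f l else f l + 1 := fun l hl => by
      simp [hg, appendVal, hl]
    have hgN : g N = v := by simp [hg, appendVal]
    have hsame : SameOrder N f g := by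
      intro a ha b hb
      rw [hgl a ha, hgl b hb]
      split_ifs <;> omega
    have hgap : ∀ l < N, (g N < g l ↔ v ≤ f l) := by
      intro l hl
      rw [hgN, hgl l hl]
      split_ifs <;> omega
    have hne : ∀ l < N, g l ≠ g N := by
      intro l hl
      rw [hgN, hgl l hl]
      split_ifs <;> omega
    have hinj' : ∀ a ≤ N, ∀ b ≤ N, g a = g b → a = b := by
      intro a ha b hb hab
      rcases Nat.lt_or_ge a N with ha' | ha' <;> rcases Nat.lt_or_ge b N with hb' | hb'
      · refine hinj a ha' b hb' ?_
        have h1 := hsame a ha' b hb'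
        have h2 := hsame b hb' a ha'
        omega
      · obtain rfl : b = N := by omega
        exact absurd hab (hne a ha')
      · obtain rfl : a = N := by omega
        exact absurd hab.symm (hne b hb')
      · omega
    have hcard : (aboveSet g N).card = c := by
      have himg : (Finset.range N).image f = Finset.range N := by
        refine Finset.eq_of_subset_of_card_le ?_ ?_
        · intro x hx
          rw [Finset.mem_image] at hx
          obtain ⟨a, ha, rfl⟩ := hx
          exact Finset.mem_range.2 (hlt a (Finset.mem_range.1 ha))
        · rw [Finset.card_image_of_injOn]
          intro a ha b hb hab
          exact hinj a (by simpa using ha) b (by simpa using hb) hab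
      have h1 : (aboveSet g N).image f = Finset.Ico v N := by
        ext x
        rw [Finset.mem_image, Finset.mem_Ico]
        constructor
        · rintro ⟨l, hl, rfl⟩
          rw [mem_aboveSet] at hl
          exact ⟨(hgap l hl.1).1 hl.2, hlt l hl.1⟩
        · rintro ⟨hx1, hx2⟩
          have : x ∈ (Finset.range N).image f := by rw [himg]; exact Finset.mem_range.2 hx2
          rw [Finset.mem_image] at this
          obtain ⟨l, hl, rfl⟩ := this
          rw [Finset.mem_range] at hl
          exact ⟨l, mem_aboveSet.2 ⟨hl, (hgap l hl).2 hx1⟩, rfl⟩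
      have h2 : ((aboveSet g N).image f).card = (aboveSet g N).card := by
        refine Finset.card_image_of_injOn ?_
        intro a ha b hb hab
        exact hinj a (mem_aboveSet.1 ha).1 b (mem_aboveSet.1 hb).1 hab
      rw [← h2, h1, Nat.card_Ico]
      omega
    have hav' : Av g (N + 1) := by
      intro a b d hab hbd hd h1 h2
      rcases Nat.lt_or_ge d N with hd' | hd'
      · exact hav a b d hab hbd hd' ((hsame d hd' b (by omega)).2 h1)
          ((hsame b (by omega) a (by omega)).2 h2)
      · obtain rfl : d = N := by omega
        -- `b` and all of `satSet f d` lie above the new entry: too many.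
        have hsub : insert b (satSet f d) ⊆ aboveSet g d := by
          intro l hl
          rw [Finset.mem_insert] at hl
          rcases hl with rfl | hl
          · exact mem_aboveSet.2 ⟨hbd, h1⟩
          · rw [mem_satSet] at hl
            have h3 := hl.2 b hbd ⟨a, hab, (hsame b hbd a (by omega)).2 h2⟩
            have h4 := (hgap b hbd).1 h1
            exact mem_aboveSet.2 ⟨hl.1, (hgap l hl.1).2 (by omega)⟩
        have h5 := Finset.card_le_card hsub
        rw [Finset.card_insert_of_notMem, hw d le_rfl, hcard] at h5
        · omega
        · intro hmem
          have := (mem_satSet.1 hmem).2 b hbd ⟨a, hab, (hsame b hbd a (by omega)).2 h2⟩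
          omega
    refine ⟨g, ?_, fun a ha b hb => hinj' a (by omega) b (by omega), hav', ?_⟩
    · intro a ha
      rcases Nat.lt_or_ge a N with ha' | ha'
      · have := hlt a ha'
        rw [hgl a ha']
        split_ifs <;> omega
      · obtain rfl : a = N := by omega
        omega
    · intro k hk
      rcases Nat.lt_or_ge k (N + 1) with hk' | hk'
      · rw [← hw k (by omega), (hsame.mono (show k ≤ N by omega)).satSet_eq]
      · obtain rfl : k = N + 1 := by omega
        rw [hcw]
        split_ifs with h
        · rw [satSet_succ_of_not_hasInv hinj' (by rw [hasInv_iff_aboveSet]; omega),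
            ← hsame.satSet_eq, hw N le_rfl]
        · rw [satSet_succ_of_hasInv hav' (by rw [hasInv_iff_aboveSet]; omega), hcard]

end Sequences

/-! ### Permutations as sequences -/

section Translation

variable {N : ℕ}

/-- The one-line notation of `π` as a sequence indexed by `ℕ`, with value `0` from position `N`
on. -/
def toSeq (π : Equiv.Perm (Fin N)) (l : ℕ) : ℕ := if h : l < N then (π ⟨l, h⟩).val else 0

lemma toSeq_of_lt (π : Equiv.Perm (Fin N)) {l : ℕ} (h : l < N) : toSeq π l = (π ⟨l, h⟩).val := by
  simp [toSeq, h]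

lemma toSeq_val (π : Equiv.Perm (Fin N)) (l : Fin N) : toSeq π l.val = (π l).val :=
  toSeq_of_lt π l.isLt

lemma toSeq_inj (π : Equiv.Perm (Fin N)) {a b : ℕ} (ha : a < N) (hb : b < N)
    (h : toSeq π a = toSeq π b) : a = b := by
  rw [toSeq_of_lt π ha, toSeq_of_lt π hb] at h
  simpa using π.injective (Fin.ext h)

lemma isLRMax_iff (π : Equiv.Perm (Fin N)) (m : Fin N) :
    IsLRMax π m ↔ ¬ HasInv (toSeq π) m.val := by
  constructor
  · rintro h ⟨a, ha, hlt⟩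
    have h1 := h ⟨a, ha.trans m.isLt⟩ ha
    rw [toSeq_val, toSeq_of_lt π (ha.trans m.isLt)] at hlt
    exact absurd h1 (not_lt.2 (Fin.le_def.2 hlt.le))
  · intro h l hl
    by_contra hcon
    refine h ⟨l.val, hl, ?_⟩
    rw [toSeq_val, toSeq_val]
    have h1 : π l ≠ π m := fun h' => hl.ne (π.injective h')
    exact lt_of_le_of_ne (Fin.le_def.1 (not_lt.1 hcon)) fun h' => h1 (Fin.ext h'.symm)

lemma avoids321_iff (π : Equiv.Perm (Fin N)) : Avoids321 π ↔ Av (toSeq π) N := by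
  constructor
  · intro h a b c hab hbc hc h1 h2
    rw [toSeq_of_lt π hc, toSeq_of_lt π (by omega)] at h1
    rw [toSeq_of_lt π (by omega), toSeq_of_lt π (by omega)] at h2
    exact h ⟨⟨a, by omega⟩, ⟨b, by omega⟩, ⟨c, hc⟩, hab, hbc, h1, h2⟩
  · rintro h ⟨a, b, c, hab, hbc, h1, h2⟩
    refine h a b c hab hbc c.isLt ?_ ?_
    · rw [toSeq_val, toSeq_val]; exact h1
    · rw [toSeq_val, toSeq_val]; exact h2

lemma rank_eq (π : Equiv.Perm (Fin N)) {k : ℕ} (hk : k ≤ N) (m : Fin N) :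
    (Finset.univ.filter (fun l : Fin N => l.val < k ∧ π m < π l)).card =
      ((Finset.range k).filter fun l => toSeq π m.val < toSeq π l).card := by
  rw [← Finset.card_map Fin.valEmbedding]
  congr 1
  ext l
  simp only [Finset.mem_map, Finset.mem_filter, Finset.mem_univ, true_and, Finset.mem_range,
    Fin.valEmbedding_apply]
  constructor
  · rintro ⟨a, ⟨h1, h2⟩, rfl⟩
    rw [toSeq_val, toSeq_val]
    exact ⟨h1, h2⟩
  · rintro ⟨h1, h2⟩
    refine ⟨⟨l, by omega⟩, ⟨h1, ?_⟩, rfl⟩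
    rw [toSeq_val, toSeq_of_lt π (show l < N by omega)] at h2
    exact h2

/-- The saturated maxima are the entries above the largest entry that is not a left-to-right
maximum; the latter has rank `satCount` from the top. -/
lemma satCount_eq (π : Equiv.Perm (Fin N)) {k : ℕ} (hk : k ≤ N) :
    satCount π k = (satSet (toSeq π) k).card := by
  classical
  have hsub : satSet (toSeq π) k ⊆ Finset.range k := fun l hl =>
    Finset.mem_range.2 (mem_satSet.1 hl).1
  refine IsGreatest.csSup_eq ⟨⟨?_, ?_⟩, ?_⟩
  · simpa using Finset.card_le_card hsub
  · intro m hm hlt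
    rw [isLRMax_iff]
    intro hI
    rw [rank_eq π hk] at hlt
    refine absurd hlt (not_lt.2 (Finset.card_le_card fun l hl => ?_))
    rw [mem_satSet] at hl
    exact Finset.mem_filter.2 ⟨Finset.mem_range.2 hl.1, hl.2 m.val hm hI⟩
  · rintro i ⟨hik, hi⟩
    by_cases hex : ((Finset.range k).filter fun m => HasInv (toSeq π) m).Nonempty
    · obtain ⟨m, hm, hmax⟩ := Finset.exists_max_image _ (toSeq π) hex
      rw [Finset.mem_filter, Finset.mem_range] at hm
      by_contra hcon
      have h1 := hi ⟨m, by omega⟩ hm.1 (by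
        rw [rank_eq π hk]
        refine lt_of_le_of_lt (Finset.card_le_card fun l hl => ?_) (not_le.1 hcon)
        rw [Finset.mem_filter, Finset.mem_range] at hl
        refine mem_satSet.2 ⟨hl.1, fun m' hm' hI => ?_⟩
        exact lt_of_le_of_lt (hmax m' (Finset.mem_filter.2 ⟨Finset.mem_range.2 hm', hI⟩)) hl.2)
      rw [isLRMax_iff] at h1
      exact h1 hm.2
    · have : satSet (toSeq π) k = Finset.range k := by
        refine Finset.Subset.antisymm hsub fun l hl => mem_satSet.2 ⟨Finset.mem_range.1 hl, ?_⟩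
        intro m hm hI
        exact absurd ⟨m, Finset.mem_filter.2 ⟨Finset.mem_range.2 hm, hI⟩⟩ hex
      rw [this, Finset.card_range]
      exact hik

lemma flatten_eq_of_sameOrder {π τ : Equiv.Perm (Fin N)} {k : ℕ} (hk : k ≤ N)
    (h : SameOrder k (toSeq π) (toSeq τ)) : flatten π hk = flatten τ hk := by
  have h' : ∀ a b : Fin k, π (Fin.castLE hk b) < π (Fin.castLE hk a) ↔
      τ (Fin.castLE hk b) < τ (Fin.castLE hk a) := by
    intro a b
    have := h b.val b.isLt a.val a.isLt
    rw [toSeq_of_lt π (by omega), toSeq_of_lt π (by omega), toSeq_of_lt τ (by omega),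
      toSeq_of_lt τ (by omega)] at this
    exact this
  funext a
  simp only [flatten, h']

/-- The 321-avoiding permutations of size `N`. -/
abbrev Perm321 (N : ℕ) : Type := {π : Equiv.Perm (Fin N) // Avoids321 ⇑π}

/-- The number of value-saturated left-to-right maxima of the length-`k` prefix. -/
noncomputable def satLabel (ω : Perm321 N) (k : ℕ) : ℕ := (satSet (toSeq ω.1) k).card

lemma Perm321.av (ω : Perm321 N) {k : ℕ} (hk : k ≤ N) : Av (toSeq ω.1) k :=
  fun a b c hab hbc hc => (avoids321_iff ω.1).1 ω.2 a b c hab hbc (by omega)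

lemma satLabel_step (ω : Perm321 N) {k : ℕ} (hk : k < N) :
    1 ≤ satLabel ω (k + 1) ∧ satLabel ω (k + 1) ≤ satLabel ω k + 1 ∧
      (satLabel ω (k + 1) = satLabel ω k + 1 ↔ ¬ HasInv (toSeq ω.1) k) :=
  satSet_card_step (fun _ ha _ hb => toSeq_inj ω.1 (by omega) (by omega)) (ω.av hk)

lemma sameOrder_of_agree {ω τ : Perm321 N} {k : ℕ} (hk : k ≤ N) (h : Agree satLabel k ω τ) :
    SameOrder k (toSeq τ.1) (toSeq ω.1) := by
  induction k with
  | zero => intro a ha; omega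
  | succ k ih =>
    exact sameOrder_succ (fun _ ha _ hb => toSeq_inj τ.1 (by omega) (by omega))
      (fun _ ha _ hb => toSeq_inj ω.1 (by omega) (by omega)) (τ.av hk) (ω.av hk)
      (ih (by omega) fun j hj => h j (by omega)) (h (k + 1) le_rfl)

lemma flatten_self (π : Equiv.Perm (Fin N)) : flatten π le_rfl = π := by
  funext a
  apply Fin.ext
  have h : (Finset.univ.filter fun b : Fin N => π b < π a) =
      (Finset.Iio (π a)).map π.symm.toEmbedding := by
    ext b
    simp [Finset.mem_map_equiv]
  simp only [flatten, Fin.castLE_rfl, id]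
  rw [h, Finset.card_map, Fin.card_Iio]

lemma isCatalanTree_satLabel (N : ℕ) : IsCatalanTree N (satLabel (N := N)) where
  zero ω := by simp [satLabel, satSet]
  pos ω k hk := (satLabel_step ω hk).1
  le_succ ω k hk := (satLabel_step ω hk).2.1
  extend ω k hk j hj hjle := by
    -- Any valid continuation of the labels will do; the constant one is chosen.
    obtain ⟨f, hlt, hinj, hav, hw⟩ := exists_of_labels
      (fun i => if i ≤ k then satLabel ω i else j) (by simp [satLabel, satSet]) N
      (fun i hi => by
        split_ifs
        · exact (satLabel_step ω hi).1
        · exact hj)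
      (fun i hi => by
        split_ifs with h1 h2 h2
        · exact (satLabel_step ω hi).2.1
        · omega
        · obtain rfl : i = k := by omega
          exact hjle
        · omega)
    have hbij : Function.Bijective fun a : Fin N => (⟨f a, hlt a a.isLt⟩ : Fin N) := by
      rw [← Finite.injective_iff_bijective]
      intro a b hab
      exact Fin.ext (hinj a a.isLt b b.isLt (Fin.ext_iff.1 hab))
    have hf : SameOrder N (toSeq (Equiv.ofBijective _ hbij)) f := by
      intro a ha b hb
      rw [toSeq_of_lt _ ha, toSeq_of_lt _ hb]
      rfl
    refine ⟨⟨Equiv.ofBijective _ hbij, ?_⟩, fun i hi => ?_, ?_⟩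
    · rw [avoids321_iff]
      intro a b c hab hbc hc h1 h2
      exact hav a b c hab hbc hc ((hf c hc b (by omega)).1 h1) ((hf b (by omega) a (by omega)).1 h2)
    · rw [satLabel, (hf.mono (show i ≤ N by omega)).satSet_eq, hw i (by omega), if_pos hi]
    · rw [satLabel, (hf.mono (show k + 1 ≤ N by omega)).satSet_eq, hw (k + 1) (by omega),
        if_neg (by omega)]
  inj ω τ h := by
    have h1 := flatten_eq_of_sameOrder le_rfl (sameOrder_of_agree le_rfl h)
    rw [flatten_self, flatten_self] at h1
    exact Subtype.ext (DFunLike.coe_injective h1)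

lemma isLRMax_iff_satLabel (ω : Perm321 N) {i : ℕ} (hi : 1 ≤ i) (h1 : i - 1 < N) :
    IsLRMax ω.1 ⟨i - 1, h1⟩ ↔ satLabel ω i = satLabel ω (i - 1) + 1 := by
  obtain ⟨k, rfl⟩ : ∃ k, i = k + 1 := ⟨i - 1, by omega⟩
  rw [isLRMax_iff]
  exact (satLabel_step ω h1).2.2.symm

lemma lastRise_iff (ω : Perm321 N) {i : ℕ} (hi : 1 ≤ i) (h1 : i - 1 < N)
    (h2 : N - 1 < N) : LastRise N satLabel i ω ↔ ω.1 ⟨i - 1, h1⟩ = ⟨N - 1, h2⟩ := by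
  rw [LastRise, ← isLRMax_iff_satLabel ω hi h1]
  constructor
  · rintro ⟨hLR, hno⟩
    obtain ⟨m, hm⟩ := ω.1.surjective ⟨N - 1, h2⟩
    rcases lt_trichotomy m ⟨i - 1, h1⟩ with h | h | h
    · have := hLR m h
      rw [hm, Fin.lt_def] at this
      have := (ω.1 ⟨i - 1, h1⟩).isLt
      simp only at *
      omega
    · rw [← h, hm]
    · refine absurd ?_ (hno m.val (by rw [Fin.lt_def] at h; simp only at h; omega) m.isLt)
      refine (isLRMax_iff_satLabel ω (i := m.val + 1) (by omega) m.isLt).1 fun l hl => ?_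
      have hl' : l < m := hl
      have hne : ω.1 l ≠ ω.1 m := fun h' => hl'.ne (ω.1.injective h')
      have hlt := (ω.1 l).isLt
      change ω.1 l < ω.1 m
      rw [hm] at hne ⊢
      rw [Fin.lt_def]
      rw [Ne, Fin.ext_iff] at hne
      simp only at *
      omega
  · intro hmax
    refine ⟨fun l hl => ?_, fun j hj hjN hrise => ?_⟩
    · have hne : ω.1 l ≠ ω.1 ⟨i - 1, h1⟩ := fun h' => hl.ne (ω.1.injective h')
      have hlt := (ω.1 l).isLt
      rw [hmax] at hne ⊢
      rw [Fin.lt_def]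
      rw [Ne, Fin.ext_iff] at hne
      simp only at *
      omega
    · have := (isLRMax_iff_satLabel ω (i := j + 1) (by omega) hjN).2 hrise ⟨i - 1, h1⟩
        (by rw [Fin.lt_def]; simp only; omega)
      rw [hmax, Fin.lt_def] at this
      have h4 := (ω.1 ⟨j + 1 - 1, hjN⟩).isLt
      simp only at *
      omega

lemma wins_iff (s : Strategy) (ω : Perm321 N) : Wins s ω.1 ↔
    WinsAfter N satLabel (fun τ k => ∃ h : k ≤ N, s k (flatten τ.1 h) = true) 0 ω := by
  constructor
  · rintro ⟨i, ⟨hi, hiN, hs, hno⟩, h1, h2, hmax⟩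
    refine ⟨i, hi, hiN, ?_, ?_, (lastRise_iff ω hi h1 h2).2 hmax⟩
    · exact hs.imp (fun h => ⟨hiN, h⟩) id
    · rintro j hj hji ⟨h, ht⟩
      rw [hno j hj hji h] at ht
      exact absurd ht (by simp)
  · rintro ⟨i, hi, hiN, hs, hno, hlast⟩
    refine ⟨i, ⟨hi, hiN, hs.imp (fun ⟨_, h⟩ => h) id, fun j hj hji h => ?_⟩, by omega, by omega,
      (lastRise_iff ω hi (by omega) (by omega)).1 hlast⟩
    have := hno j hj hji
    by_contra hcon
    exact this ⟨h, by simpa using hcon⟩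

lemma threshWins_iff (σ : ℕ → ℕ) (ω : Perm321 N) : ThreshWins σ ω.1 ↔
    WinsAfter N satLabel (fun τ k => satLabel τ k = satLabel τ (k - 1) + 1 ∧
      σ (N - k) ≤ satLabel τ k) 0 ω := by
  have key : ∀ i, 1 ≤ i → i ≤ N →
      ((∃ h1 : i - 1 < N, IsLRMax ω.1 ⟨i - 1, h1⟩ ∧ σ (N - i) ≤ satCount ω.1 i) ↔
        (satLabel ω i = satLabel ω (i - 1) + 1 ∧ σ (N - i) ≤ satLabel ω i)) := by
    intro i hi hiN
    have h1 : i - 1 < N := by omega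
    rw [satCount_eq ω.1 hiN, ← isLRMax_iff_satLabel ω hi h1]
    exact ⟨fun ⟨_, h⟩ => h, fun h => ⟨h1, h⟩⟩
  constructor
  · rintro ⟨i, hi, hiN, hs, hno, h1, hmax⟩
    refine ⟨i, hi, hiN, hs.imp (key i hi hiN).1 id, fun j hj hji h => ?_,
      (lastRise_iff ω hi h1 (by omega)).2 hmax⟩
    exact hno j hj hji ((key j hj (by omega)).2 h)
  · rintro ⟨i, hi, hiN, hs, hno, hlast⟩
    refine ⟨i, hi, hiN, hs.imp (key i hi hiN).2 id, fun j hj hji h => ?_, by omega,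
      (lastRise_iff ω hi (by omega) (by omega)).1 hlast⟩
    exact hno j hj hji ((key j hj (by omega)).1 h)

open Classical in
lemma card_eq_card_filter (Q : Equiv.Perm (Fin N) → Prop) (R : Perm321 N → Prop)
    (h : ∀ ω : Perm321 N, Q ω.1 ↔ R ω) (ω₀ : Perm321 N) :
    Nat.card {π : Equiv.Perm (Fin N) // Avoids321 ⇑π ∧ Q π} =
      (Finset.univ.filter fun ω => Agree satLabel 0 ω₀ ω ∧ R ω).card := by
  rw [Nat.card_congr (Equiv.subtypeSubtypeEquivSubtypeInter
    (fun π : Equiv.Perm (Fin N) => Avoids321 ⇑π) Q).symm, Nat.card_eq_fintype_card,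
    Fintype.card_subtype]
  congr 1
  ext ω
  simp only [Finset.mem_filter, Finset.mem_univ, true_and, h]
  refine (and_iff_right fun j hj => ?_).symm
  obtain rfl : j = 0 := by omega
  simp [satLabel, satSet]

end Translation

/-- a single threshold function `σ` works for every `N`: the threshold strike
strategy based on value-saturated left-to-right maxima wins the maximum possible number of
321-avoiding permutations of size `N` among all strategies. -/
theorem stmt9 :
    ∃ σ : ℕ → ℕ, ∀ N : ℕ, 1 ≤ N → ∀ s : Strategy,
      Nat.card {π : Equiv.Perm (Fin N) // Avoids321 ⇑π ∧ Wins s ⇑π} ≤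
      Nat.card {π : Equiv.Perm (Fin N) // Avoids321 ⇑π ∧ ThreshWins σ ⇑π} := by
  classical
  obtain ⟨σ, hσ⟩ := exists_threshold
  refine ⟨σ, fun N _ s => ?_⟩
  have hT := isCatalanTree_satLabel N
  -- The identity serves as a reference permutation: all label sequences agree with it at time `0`.
  have hid : Avoids321 ⇑(Equiv.refl (Fin N)) := by
    rintro ⟨i, j, k, hij, hjk, h1, h2⟩
    exact absurd hij (not_lt.2 (le_of_lt h2))
  rw [card_eq_card_filter (fun π => Wins s ⇑π) _ (wins_iff s) ⟨Equiv.refl _, hid⟩,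
    card_eq_card_filter (fun π => ThreshWins σ ⇑π) _ (threshWins_iff σ) ⟨Equiv.refl _, hid⟩]
  refine (card_winsAfter_le hT ?_ N 0 (by omega) _).trans
    (card_winsAfter_threshold hT hσ ?_ ?_ N 0 (by omega) _).ge
  · intro k ω τ h
    refine exists_congr fun hk => ?_
    rw [flatten_eq_of_sameOrder hk (sameOrder_of_agree hk h)]
  · intro k ω τ h
    rw [h k le_rfl, h (k - 1) (by omega)]
  · intro ω k _
    rfl
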